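/- Let T be a finite-dimensional nilpotent Lie algebra over a field F of nilpotency class 3 with dim [T,T] = 2 such that T is stem (i.e. Z(T) ⊆ [T,T]). Then T is capable if and only if T is isomorphic to L_{4,3} or to L_{5,5}. -/

import Mathlib

open Module

universe u

/-- A witness to the capability of a Lie algebra `L` over `F`: a Lie algebra `E`
together with an isomorphism `L ≃ E ⧸ Z(E)`. -/
structure CapableWitness (F : Type u) (L : Type u) [Field F] [LieRing L] [LieAlgebra F L] where
  carrier : Type u
  [lieRing : LieRing carrier]
  [lieAlgebra : LieAlgebra F carrier]
  equiv : L ≃ₗ⁅F⁆ (carrier ⧸ LieAlgebra.center F carrier)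

/-- A Lie algebra `L` over a field `F` is capable if there exists a Lie algebra `E` over `F`
with `L ≅ E ⧸ Z(E)`. -/
def IsCapable (F : Type u) (L : Type u) [Field F] [LieRing L] [LieAlgebra F L] : Prop :=
  Nonempty (CapableWitness F L)

/-- `L` is isomorphic to `L_{4,3}`: basis `x₁,…,x₄` with `[x₁,x₂]=x₃`, `[x₁,x₃]=x₄` and all other brackets of basis vectors zero. -/
def IsL43 (F : Type u) (L : Type u) [Field F] [LieRing L] [LieAlgebra F L] : Prop :=
  ∃ b : Basis (Fin 4) F L,
    ⁅b 0, b 1⁆ = b 2 ∧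
    ⁅b 0, b 2⁆ = b 3 ∧
    ∀ i j : Fin 4, i < j → (i, j) ≠ (0, 1) → (i, j) ≠ (0, 2) → ⁅b i, b j⁆ = 0

/-- `L` is isomorphic to `L_{5,5}`: basis `x₁,…,x₅` with `[x₁,x₂]=x₃`, `[x₁,x₃]=x₅`, `[x₂,x₄]=x₅`. -/
def IsL55 (F : Type u) (L : Type u) [Field F] [LieRing L] [LieAlgebra F L] : Prop :=
  ∃ b : Basis (Fin 5) F L,
    ⁅b 0, b 1⁆ = b 2 ∧
    ⁅b 0, b 2⁆ = b 4 ∧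
    ⁅b 1, b 3⁆ = b 4 ∧
    ∀ i j : Fin 5, i < j → (i, j) ≠ (0, 1) → (i, j) ≠ (0, 2) → (i, j) ≠ (1, 3) → ⁅b i, b j⁆ = 0

/-- Underlying space of the central extension of `T` by `F`. -/
def CExt (F : Type u) (T : Type u) : Type u := T × F

section CExtSec
variable (F : Type u) (T : Type u) [Field F] [LieRing T] [LieAlgebra F T]

instance : AddCommGroup (CExt F T) := inferInstanceAs (AddCommGroup (T × F))
instance : Module F (CExt F T) := inferInstanceAs (Module F (T × F))

/-- The Lie ring structure on the central extension attached to a 2-cocycle. -/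
@[reducible] def cextLieRing (ω : T →ₗ[F] T →ₗ[F] F) (halt : ∀ x, ω x x = 0)
    (hcoc : ∀ x y z, ω x ⁅y, z⁆ = ω ⁅x, y⁆ z + ω y ⁅x, z⁆) : LieRing (CExt F T) where
  bracket p q := (⁅p.1, q.1⁆, ω p.1 q.1)
  add_lie p q r := Prod.ext (add_lie p.1 q.1 r.1)
    (show ω (p.1 + q.1) r.1 = ω p.1 r.1 + ω q.1 r.1 by simp)
  lie_add p q r := Prod.ext (lie_add p.1 q.1 r.1)
    (show ω p.1 (q.1 + r.1) = ω p.1 q.1 + ω p.1 r.1 by simp)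
  lie_self p := Prod.ext (lie_self p.1) (halt p.1)
  leibniz_lie p q r := Prod.ext (leibniz_lie p.1 q.1 r.1) (hcoc p.1 q.1 r.1)

theorem capable_of_cocycle (ω : T →ₗ[F] T →ₗ[F] F) (halt : ∀ x, ω x x = 0)
    (hcoc : ∀ x y z, ω x ⁅y, z⁆ = ω ⁅x, y⁆ z + ω y ⁅x, z⁆)
    (hz : ∀ z : T, (∀ x : T, ⁅x, z⁆ = 0) → (∀ x, ω x z = 0) → z = 0) : IsCapable F T := by
  let := cextLieRing F T ω halt hcoc
  let : LieAlgebra F (CExt F T) :=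
    { lie_smul := fun t p q => Prod.ext (lie_smul t p.1 q.1)
        (show ω p.1 (t • q.1) = t • ω p.1 q.1 by simp) }
  let f : CExt F T →ₗ⁅F⁆ T :=
    { toFun := fun p => p.1
      map_add' := fun _ _ => rfl
      map_smul' := fun _ _ => rfl
      map_lie' := rfl }
  have hf : Function.Surjective f := fun t => ⟨(t, 0), rfl⟩
  have hker : f.ker = LieAlgebra.center F (CExt F T) := by
    ext p
    rw [LieHom.mem_ker, LieModule.mem_maxTrivSubmodule]
    constructor
    · intro h q
      have h : p.1 = 0 := h
      refine Prod.ext (show ⁅q.1, p.1⁆ = 0 by simp [h]) (show ω q.1 p.1 = 0 by simp [h])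
    · intro h
      refine hz p.1 (fun x => ?_) (fun x => ?_)
      · exact congrArg Prod.fst (h (x, 0))
      · exact congrArg Prod.snd (h (x, 0))
  have hr : f.range = ⊤ := by rw [LieHom.range_eq_top]; exact hf
  have e1 := f.quotKerEquivRange
  rw [hker, hr] at e1
  exact ⟨{ carrier := CExt F T, equiv := (e1.trans LieSubalgebra.topEquiv).symm }⟩

theorem capable_of_L43 (h : IsL43 F T) : IsCapable F T := by
  obtain ⟨b, h01, h02, h0⟩ := h
  have h03 : ⁅b 0, b 3⁆ = 0 := h0 0 3 (by decide) (by decide) (by decide)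
  have h12 : ⁅b 1, b 2⁆ = 0 := h0 1 2 (by decide) (by decide) (by decide)
  have h13 : ⁅b 1, b 3⁆ = 0 := h0 1 3 (by decide) (by decide) (by decide)
  have h23 : ⁅b 2, b 3⁆ = 0 := h0 2 3 (by decide) (by decide) (by decide)
  have h10 : ⁅b 1, b 0⁆ = -b 2 := by rw [← lie_skew, h01]
  have h20 : ⁅b 2, b 0⁆ = -b 3 := by rw [← lie_skew, h02]
  have h30 : ⁅b 3, b 0⁆ = 0 := by rw [← lie_skew, h03, neg_zero]
  have h21 : ⁅b 2, b 1⁆ = 0 := by rw [← lie_skew, h12, neg_zero]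
  have h31 : ⁅b 3, b 1⁆ = 0 := by rw [← lie_skew, h13, neg_zero]
  have h32 : ⁅b 3, b 2⁆ = 0 := by rw [← lie_skew, h23, neg_zero]
  have hb : ∀ x y : T, ⁅x, y⁆ = (b.coord 0 x * b.coord 1 y - b.coord 1 x * b.coord 0 y) • b 2
      + (b.coord 0 x * b.coord 2 y - b.coord 2 x * b.coord 0 y) • b 3 := by
    intro x y
    conv_lhs => rw [← b.sum_repr x, ← b.sum_repr y]
    simp only [Fin.sum_univ_four, lie_add, add_lie, smul_lie, lie_smul, lie_self, Basis.coord_apply,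
      h01, h02, h03, h12, h13, h23, h10, h20, h30, h21, h31, h32]
    module
  have c (i j : Fin 4) : b.coord i (b j) = if j = i then 1 else 0 := by
    simp [Finsupp.single_apply]
  let ω : T →ₗ[F] T →ₗ[F] F := LinearMap.mk₂ F
    (fun x y => b.coord 0 x * b.coord 3 y - b.coord 3 x * b.coord 0 y)
    (by intros; simp only [map_add]; ring) (by intros; simp only [map_smul, smul_eq_mul]; ring)
    (by intros; simp only [map_add]; ring) (by intros; simp only [map_smul, smul_eq_mul]; ring)
  have hω : ∀ x y, ω x y = b.coord 0 x * b.coord 3 y - b.coord 3 x * b.coord 0 y :=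
    fun _ _ => rfl
  refine capable_of_cocycle F T ω (fun x => by rw [hω]; ring) (fun x y z => ?_) (fun z hz hz' => ?_)
  · simp only [hω]
    simp only [hb, map_add, map_smul, c, smul_eq_mul]
    simp
    ring
  · have h1 := hz (b 0)
    have h2 := hz (b 1)
    have h3 := hz' (b 0)
    rw [hb] at h1 h2
    rw [hω] at h3
    have k1 := congrArg (b.coord 2) h1
    have k2 := congrArg (b.coord 3) h1
    have k3 := congrArg (b.coord 2) h2
    simp only [map_add, map_smul, c, smul_eq_mul, map_zero] at k1 k2 k3 h3
    simp at k1 k2 k3 h3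
    refine b.ext_elem fun i => ?_
    fin_cases i <;> simp [k1, k2, k3, h3]

theorem capable_of_L55 (h : IsL55 F T) : IsCapable F T := by
  obtain ⟨b, h01, h02, h13, h0⟩ := h
  have h03 : ⁅b 0, b 3⁆ = 0 := h0 0 3 (by decide) (by decide) (by decide) (by decide)
  have h04 : ⁅b 0, b 4⁆ = 0 := h0 0 4 (by decide) (by decide) (by decide) (by decide)
  have h12 : ⁅b 1, b 2⁆ = 0 := h0 1 2 (by decide) (by decide) (by decide) (by decide)
  have h14 : ⁅b 1, b 4⁆ = 0 := h0 1 4 (by decide) (by decide) (by decide) (by decide)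
  have h23 : ⁅b 2, b 3⁆ = 0 := h0 2 3 (by decide) (by decide) (by decide) (by decide)
  have h24 : ⁅b 2, b 4⁆ = 0 := h0 2 4 (by decide) (by decide) (by decide) (by decide)
  have h34 : ⁅b 3, b 4⁆ = 0 := h0 3 4 (by decide) (by decide) (by decide) (by decide)
  have h10 : ⁅b 1, b 0⁆ = -b 2 := by rw [← lie_skew, h01]
  have h20 : ⁅b 2, b 0⁆ = -b 4 := by rw [← lie_skew, h02]
  have h31 : ⁅b 3, b 1⁆ = -b 4 := by rw [← lie_skew, h13]
  have h30 : ⁅b 3, b 0⁆ = 0 := by rw [← lie_skew, h03, neg_zero]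
  have h40 : ⁅b 4, b 0⁆ = 0 := by rw [← lie_skew, h04, neg_zero]
  have h21 : ⁅b 2, b 1⁆ = 0 := by rw [← lie_skew, h12, neg_zero]
  have h41 : ⁅b 4, b 1⁆ = 0 := by rw [← lie_skew, h14, neg_zero]
  have h32 : ⁅b 3, b 2⁆ = 0 := by rw [← lie_skew, h23, neg_zero]
  have h42 : ⁅b 4, b 2⁆ = 0 := by rw [← lie_skew, h24, neg_zero]
  have h43 : ⁅b 4, b 3⁆ = 0 := by rw [← lie_skew, h34, neg_zero]
  have hb : ∀ x y : T, ⁅x, y⁆ = (b.coord 0 x * b.coord 1 y - b.coord 1 x * b.coord 0 y) • b 2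
      + (b.coord 0 x * b.coord 2 y - b.coord 2 x * b.coord 0 y
        + b.coord 1 x * b.coord 3 y - b.coord 3 x * b.coord 1 y) • b 4 := by
    intro x y
    conv_lhs => rw [← b.sum_repr x, ← b.sum_repr y]
    simp only [Fin.sum_univ_five, lie_add, add_lie, smul_lie, lie_smul, lie_self, Basis.coord_apply,
      h01, h02, h03, h04, h12, h13, h14, h23, h24, h34, h10, h20, h30, h40, h21, h31, h41, h32,
      h42, h43]
    module
  have c (i j : Fin 5) : b.coord i (b j) = if j = i then 1 else 0 := by
    simp [Finsupp.single_apply]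
  let ω : T →ₗ[F] T →ₗ[F] F := LinearMap.mk₂ F
    (fun x y => b.coord 0 x * b.coord 4 y - b.coord 4 x * b.coord 0 y
      + b.coord 2 x * b.coord 3 y - b.coord 3 x * b.coord 2 y)
    (by intros; simp only [map_add]; ring) (by intros; simp only [map_smul, smul_eq_mul]; ring)
    (by intros; simp only [map_add]; ring) (by intros; simp only [map_smul, smul_eq_mul]; ring)
  have hω : ∀ x y, ω x y = b.coord 0 x * b.coord 4 y - b.coord 4 x * b.coord 0 y
      + b.coord 2 x * b.coord 3 y - b.coord 3 x * b.coord 2 y :=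
    fun _ _ => rfl
  refine capable_of_cocycle F T ω (fun x => by rw [hω]; ring) (fun x y z => ?_) (fun z hz hz' => ?_)
  · simp only [hω]
    simp only [hb, map_add, map_smul, c, smul_eq_mul]
    simp
    ring
  · have h1 := hz (b 0)
    have h2 := hz (b 1)
    have h3 := hz' (b 0)
    rw [hb] at h1 h2
    rw [hω] at h3
    have k1 := congrArg (b.coord 2) h1
    have k2 := congrArg (b.coord 4) h1
    have k3 := congrArg (b.coord 2) h2
    have k4 := congrArg (b.coord 4) h2
    simp only [map_add, map_smul, c, smul_eq_mul, map_zero] at k1 k2 k3 k4 h3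
    simp at k1 k2 k3 k4 h3
    refine b.ext_elem fun i => ?_
    fin_cases i <;> simp [k1, k2, k3, k4, h3]

end CExtSec

section Forward
variable (F : Type u) (T : Type u) [Field F] [LieRing T] [LieAlgebra F T]

theorem lcs_one_mem (x y : T) : ⁅x, y⁆ ∈ LieModule.lowerCentralSeries F T T 1 := by
  rw [LieModule.lowerCentralSeries_succ, LieModule.lowerCentralSeries_zero]
  exact LieSubmodule.lie_mem_lie trivial trivial

theorem lcs_succ_mem (k : ℕ) (x : T) {y : T} (hy : y ∈ LieModule.lowerCentralSeries F T T k) :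
    ⁅x, y⁆ ∈ LieModule.lowerCentralSeries F T T (k + 1) := by
  rw [LieModule.lowerCentralSeries_succ]
  exact LieSubmodule.lie_mem_lie trivial hy

theorem span_of_lie_ne_zero [FiniteDimensional F T]
    (h3 : LieModule.lowerCentralSeries F T T 3 = ⊥)
    (hder : finrank F ↥(LieModule.lowerCentralSeries F T T 1) = 2)
    {x a : T} (ha : a ∈ LieModule.lowerCentralSeries F T T 1) (hxa : ⁅x, a⁆ ≠ 0)
    {u : T} (hu : u ∈ LieModule.lowerCentralSeries F T T 1) :
    ∃ β γ : F, u = β • a + γ • ⁅x, a⁆ := by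
  have hc0 : ⁅x, ⁅x, a⁆⁆ = 0 := by
    have := lcs_succ_mem F T 2 x (lcs_succ_mem F T 1 x ha)
    rw [h3] at this
    simpa using this
  let v : Fin 2 → LieModule.lowerCentralSeries F T T 1 := ![⟨a, ha⟩, ⟨⁅x, a⁆, lcs_one_mem F T x a⟩]
  have hli : LinearIndependent F v := by
    rw [LinearIndependent.pair_iff]
    intro s t hst
    have hst' : s • a + t • ⁅x, a⁆ = 0 := congrArg Subtype.val hst
    have hs : s = 0 := by
      have := congrArg (fun z => ⁅x, z⁆) hst'
      simpa [hc0, hxa] using this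
    subst hs
    simpa [hxa] using hst'
  have htop := hli.span_eq_top_of_card_eq_finrank (by rw [Fintype.card_fin]; exact hder.symm)
  have hm : (⟨u, hu⟩ : LieModule.lowerCentralSeries F T T 1) ∈ Submodule.span F (Set.range v) := by
    rw [htop]; trivial
  simp only [v, Matrix.range_cons, Matrix.range_empty, Set.union_empty, Set.singleton_union] at hm
  rw [Submodule.mem_span_pair] at hm
  obtain ⟨β, γ, h⟩ := hm
  exact ⟨β, γ, (congrArg Subtype.val h).symm⟩

theorem exists_engel [FiniteDimensional F T]
    (hclass : LieModule.lowerCentralSeries F T T 2 ≠ ⊥ ∧ LieModule.lowerCentralSeries F T T 3 = ⊥)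
    (hder : finrank F ↥(LieModule.lowerCentralSeries F T T 1) = 2) :
    ∃ x y : T, ⁅x, ⁅x, y⁆⁆ ≠ 0 := by
  by_contra! hcon
  apply hclass.1
  have h3 : ∀ x y : T, ∀ u ∈ LieModule.lowerCentralSeries F T T 1, ⁅x, ⁅y, u⁆⁆ = 0 := by
    intro x y u hu
    have := lcs_succ_mem F T 2 x (lcs_succ_mem F T 1 y hu)
    rw [hclass.2] at this
    simpa using this
  have key : ∀ x y z : T, ⁅x, ⁅y, z⁆⁆ = 0 := by
    intro x y z
    by_contra hne
    have hy : ⁅y, ⁅x, z⁆⁆ = 0 := by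
      obtain ⟨β, γ, h⟩ := span_of_lie_ne_zero F T hclass.2 hder (lcs_one_mem F T y z) hne
        (lcs_one_mem F T x z)
      rw [h, lie_add, lie_smul, lie_smul, hcon y z, h3 y x _ (lcs_one_mem F T y z)]
      simp
    have hz : ⁅⁅x, y⁆, z⁆ = 0 := by
      obtain ⟨β, γ, h⟩ := span_of_lie_ne_zero F T hclass.2 hder (lcs_one_mem F T y z) hne
        (lcs_one_mem F T x y)
      have h' := hcon z y
      rw [← lie_skew z y, lie_neg, neg_eq_zero] at h'
      rw [← lie_skew, h, lie_add, lie_smul, lie_smul, h', h3 z x _ (lcs_one_mem F T y z)]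
      simp
    apply hne
    rw [leibniz_lie, hy, hz, add_zero]
  rw [LieModule.lowerCentralSeries_succ, LieSubmodule.lie_eq_bot_iff]
  intro x _ u hu
  rw [LieModule.lowerCentralSeries_succ, LieModule.lowerCentralSeries_zero,
    ← LieSubmodule.mem_toSubmodule, LieSubmodule.lieIdeal_oper_eq_linear_span'] at hu
  induction hu using Submodule.span_induction with
  | mem u hu => obtain ⟨y, _, z, _, rfl⟩ := hu; exact key x y z
  | zero => simp
  | add a b _ _ ha hb => rw [lie_add, ha, hb, add_zero]
  | smul t a _ ha => rw [lie_smul, ha, smul_zero]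

theorem exists_normal [FiniteDimensional F T]
    (hclass : LieModule.lowerCentralSeries F T T 2 ≠ ⊥ ∧ LieModule.lowerCentralSeries F T T 3 = ⊥)
    (hder : finrank F ↥(LieModule.lowerCentralSeries F T T 1) = 2) :
    ∃ x₁ x₂ x₃ c : T, ⁅x₁, x₂⁆ = x₃ ∧ ⁅x₁, x₃⁆ = c ∧ ⁅x₂, x₃⁆ = 0 ∧ c ≠ 0 ∧
      (∀ x : T, ⁅x, c⁆ = 0) ∧ (∀ x : T, ∃ γ : F, ⁅x, x₃⁆ = γ • c) ∧
      (∀ u ∈ LieModule.lowerCentralSeries F T T 1, ∃ β γ : F, u = β • x₃ + γ • c) := by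
  obtain ⟨x, y, hxy⟩ := exists_engel F T hclass hder
  have h3 : ∀ x y : T, ∀ u ∈ LieModule.lowerCentralSeries F T T 1, ⁅x, ⁅y, u⁆⁆ = 0 := by
    intro x y u hu
    have := lcs_succ_mem F T 2 x (lcs_succ_mem F T 1 y hu)
    rw [hclass.2] at this
    simpa using this
  have hm := lcs_one_mem F T x y
  have hsp := fun u hu => span_of_lie_ne_zero F T hclass.2 hder hm hxy (u := u) hu
  have hg : ∀ t : T, ∃ γ : F, ⁅t, ⁅x, y⁆⁆ = γ • ⁅x, ⁅x, y⁆⁆ := by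
    intro t
    obtain ⟨β, γ, h⟩ := hsp _ (lcs_one_mem F T t ⁅x, y⁆)
    have h' := h3 x t _ hm
    rw [h, lie_add, lie_smul, lie_smul, h3 x x _ hm, smul_zero, add_zero] at h'
    have hβ : β = 0 := by simpa [hxy] using h'
    exact ⟨γ, by rw [h, hβ, zero_smul, zero_add]⟩
  obtain ⟨γ, hγ⟩ := hg y
  refine ⟨x, y - γ • x, ⁅x, y⁆, ⁅x, ⁅x, y⁆⁆, by simp, rfl, ?_, hxy, fun t => h3 t x _ hm, hg, hsp⟩
  rw [sub_lie, smul_lie, hγ, sub_self]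

/-- If `T` is capable, an element whose every lift is central is zero. -/
theorem exists_cover (h : IsCapable F T) : ∃ (E : Type u) (_ : LieRing E) (_ : LieAlgebra F E)
    (π : E →ₗ⁅F⁆ T), Function.Surjective π ∧ ∀ e, π e = 0 ↔ ∀ x : E, ⁅x, e⁆ = 0 := by
  obtain ⟨⟨E, φ⟩⟩ := h
  let q : E →ₗ⁅F⁆ (E ⧸ LieAlgebra.center F E) :=
    { (LieSubmodule.Quotient.mk' (LieAlgebra.center F E) : E →ₗ[F] (E ⧸ LieAlgebra.center F E)) with
      map_lie' := fun {x y} => LieSubmodule.Quotient.mk_bracket _ x y }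
  refine ⟨E, inferInstance, inferInstance, φ.symm.toLieHom.comp q, ?_, fun e => ?_⟩
  · exact φ.symm.surjective.comp (LieSubmodule.Quotient.surjective_mk' _)
  · have h1 : φ.symm.toLieHom.comp q e = 0 ↔ q e = 0 := by
      change φ.symm (q e) = 0 ↔ q e = 0
      constructor
      · intro h
        apply φ.symm.injective
        exact h.trans (map_zero φ.symm.toLieHom).symm
      · intro h
        rw [h]; exact map_zero φ.symm.toLieHom
    rw [h1]
    exact (LieSubmodule.Quotient.mk_eq_zero _).trans (LieModule.mem_maxTrivSubmodule F E E e)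

theorem W_abelian (hcap : IsCapable F T) {x₁ x₂ x₃ c : T}
    (h12 : ⁅x₁, x₂⁆ = x₃) (h13 : ⁅x₁, x₃⁆ = c) (h23 : ⁅x₂, x₃⁆ = 0) (hc0 : c ≠ 0)
    (hc : ∀ x : T, ⁅x, c⁆ = 0)
    (hdec : ∀ t : T, ∃ (α β δ : F) (w : T), t = α • x₁ + β • x₂ + δ • x₃ + w ∧ ⁅x₁, w⁆ = 0 ∧ ⁅x₃, w⁆ = 0)
    {w w' : T} (hw : ⁅x₁, w⁆ = 0) (hw' : ⁅x₁, w'⁆ = 0) : ⁅w, w'⁆ ≠ c := by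
  intro hww
  obtain ⟨E, _, _, π, hsurj, hπ⟩ := exists_cover F T hcap
  obtain ⟨X₁, rfl⟩ := hsurj x₁
  obtain ⟨X₂, rfl⟩ := hsurj x₂
  obtain ⟨X₃, rfl⟩ := hsurj x₃
  obtain ⟨C, rfl⟩ := hsurj c
  obtain ⟨W, rfl⟩ := hsurj w
  obtain ⟨W', rfl⟩ := hsurj w'
  have hπ' : ∀ {e : E}, π e = 0 → ∀ x : E, ⁅e, x⁆ = 0 := fun {e} he x => by
    rw [← lie_skew, (hπ e).1 he x, neg_zero]
  -- replacing an element by another one with the same image does not alter brackets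
  have rep : ∀ {e f : E}, π e = π f → ∀ x : E, ⁅x, e⁆ = ⁅x, f⁆ := fun {e f} he x => by
    have := (hπ (e - f)).1 (by rw [map_sub, he, sub_self]) x
    rwa [lie_sub, sub_eq_zero] at this
  have eC : π C = π ⁅X₁, X₃⁆ := by rw [LieHom.map_lie, h13]
  have eC' : π C = π ⁅W, W'⁆ := by rw [LieHom.map_lie, hww]
  have e3 : π X₃ = π ⁅X₁, X₂⁆ := by rw [LieHom.map_lie, h12]
  have k1 : ⁅X₁, C⁆ = 0 := by
    rw [rep eC', leibniz_lie, hπ' (by rw [LieHom.map_lie, hw]),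
      (hπ ⁅X₁, W'⁆).1 (by rw [LieHom.map_lie, hw'])]
    simp
  have kC3 : ⁅C, X₃⁆ = 0 := by
    rw [rep e3, leibniz_lie, hπ' (by rw [LieHom.map_lie, ← lie_skew, hc, neg_zero]),
      (hπ ⁅C, X₂⁆).1 (by rw [LieHom.map_lie, ← lie_skew, hc, neg_zero])]
    simp
  have k3 : ⁅X₃, C⁆ = 0 := by rw [← lie_skew, kC3, neg_zero]
  have k2 : ⁅X₂, C⁆ = 0 := by
    have : ⁅⁅X₂, X₁⁆, X₃⁆ = 0 := by
      rw [← lie_skew X₂ X₁, neg_lie, neg_eq_zero, ← lie_skew, neg_eq_zero, ← rep e3, lie_self]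
    rw [rep eC, leibniz_lie, this, (hπ ⁅X₂, X₃⁆).1 (by rw [LieHom.map_lie, h23])]
    simp
  apply hc0
  rw [hπ]
  intro e
  obtain ⟨α, β, δ, v, hv, hv1, hv3⟩ := hdec (π e)
  obtain ⟨V, rfl⟩ := hsurj v
  have kV : ⁅V, C⁆ = 0 := by
    rw [rep eC, leibniz_lie, hπ' (by rw [LieHom.map_lie, ← lie_skew, hv1, neg_zero]),
      (hπ ⁅V, X₃⁆).1 (by rw [LieHom.map_lie, ← lie_skew, hv3, neg_zero])]
    simp
  have he : π e = π (α • X₁ + β • X₂ + δ • X₃ + V) := by simp [hv]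
  rw [← lie_skew, rep he, lie_skew]
  simp [k1, k2, k3, kV]

theorem iso_of_capable [FiniteDimensional F T]
    (hclass : LieModule.lowerCentralSeries F T T 2 ≠ ⊥ ∧ LieModule.lowerCentralSeries F T T 3 = ⊥)
    (hder : finrank F ↥(LieModule.lowerCentralSeries F T T 1) = 2)
    (hstem : LieAlgebra.center F T ≤ LieModule.lowerCentralSeries F T T 1)
    (hcap : IsCapable F T) : IsL43 F T ∨ IsL55 F T := by
  obtain ⟨x₁, x₂, x₃, c, h12, h13, h23, hc0, hc, hg, hsp⟩ := exists_normal F T hclass hder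
  have hc' : ∀ x : T, ⁅c, x⁆ = 0 := fun x => by rw [← lie_skew, hc, neg_zero]
  have h21 : ⁅x₂, x₁⁆ = -x₃ := by rw [← lie_skew, h12]
  have h31 : ⁅x₃, x₁⁆ = -c := by rw [← lie_skew, h13]
  have h32 : ⁅x₃, x₂⁆ = 0 := by rw [← lie_skew, h23, neg_zero]
  have hx30 : x₃ ≠ 0 := by rintro rfl; apply hc0; rw [← h13, lie_zero]
  have hli3 : ∀ p q : F, p • x₃ + q • c = 0 → p = 0 ∧ q = 0 := by
    intro p q h
    have h' := congrArg (fun z => ⁅x₁, z⁆) h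
    have hp : p = 0 := by simpa [h13, hc, hc0] using h'
    subst hp
    exact ⟨rfl, by simpa [hc0] using h⟩
  have hdec : ∀ t : T, ∃ (α β δ : F) (w : T), t = α • x₁ + β • x₂ + δ • x₃ + w ∧
      ⁅x₁, w⁆ = 0 ∧ ⁅x₃, w⁆ = 0 := by
    intro t
    obtain ⟨α, hα⟩ := hg t
    obtain ⟨β, δ, hβ⟩ := hsp _ (lcs_one_mem F T x₁ t)
    have hα' : ⁅x₃, t⁆ = -(α • c) := by rw [← lie_skew, hα]
    refine ⟨α, β, δ, t - (α • x₁ + β • x₂ + δ • x₃), by abel, ?_, ?_⟩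
    · simp [hβ, h12, h13]
    · simp [hα', h31, h32]
  have hbr : ∀ v w : T, ⁅x₁, ⁅v, w⁆⁆ = 0 → ∃ γ : F, ⁅v, w⁆ = γ • c := by
    intro v w h
    obtain ⟨β, γ, hh⟩ := hsp _ (lcs_one_mem F T v w)
    rw [hh] at h
    have hβ : β = 0 := by simpa [h13, hc, hc0] using h
    exact ⟨γ, by rw [hh, hβ, zero_smul, zero_add]⟩
  have h2w : ∀ w : T, ⁅x₁, w⁆ = 0 → ⁅x₃, w⁆ = 0 → ∃ γ : F, ⁅x₂, w⁆ = γ • c := by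
    intro w h1 h3
    apply hbr
    rw [leibniz_lie, h12, h3, h1, lie_zero, add_zero]
  have hab : ∀ v w : T, ⁅x₁, v⁆ = 0 → ⁅x₁, w⁆ = 0 → ⁅v, w⁆ = 0 := by
    intro v w hv hw
    obtain ⟨γ, hγ⟩ := hbr v w (by rw [leibniz_lie, hv, hw, lie_zero, zero_lie, add_zero])
    by_contra hne
    have hγ0 : γ ≠ 0 := by rintro rfl; exact hne (by rw [hγ, zero_smul])
    refine W_abelian F T hcap h12 h13 h23 hc0 hc hdec (w := γ⁻¹ • v) (w' := w) (by simp [hv]) hw ?_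
    rw [smul_lie, hγ, smul_smul, inv_mul_cancel₀ hγ0, one_smul]
  have hcen : ∀ w : T, ⁅x₁, w⁆ = 0 → ⁅x₃, w⁆ = 0 → ⁅x₂, w⁆ = 0 → ∃ q : F, w = q • c := by
    intro w h1 h3 h2
    have hz : w ∈ LieAlgebra.center F T := by
      rw [LieModule.mem_maxTrivSubmodule]
      intro t
      obtain ⟨α, β, δ, v, rfl, hv1, hv3⟩ := hdec t
      simp [h1, h2, h3, hab v w hv1 h1]
    obtain ⟨p, q, rfl⟩ := hsp _ (hstem hz)
    have hp : p = 0 := by simpa [h13, hc, hc0] using h1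
    exact ⟨q, by rw [hp, zero_smul, zero_add]⟩
  by_cases hW : ∀ w : T, ⁅x₁, w⁆ = 0 → ⁅x₃, w⁆ = 0 → ⁅x₂, w⁆ = 0
  · left
    have hli : LinearIndependent F ![x₁, x₂, x₃, c] := by
      rw [Fintype.linearIndependent_iff]
      intro g hgs
      simp [Fin.sum_univ_four] at hgs
      have h0 : g 0 = 0 := by
        have := congrArg (fun z => ⁅x₃, z⁆) hgs
        simpa [h31, h32, hc, hc0] using this
      have h1 : g 1 = 0 ∧ g 2 = 0 := by
        have := congrArg (fun z => ⁅x₁, z⁆) hgs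
        exact hli3 _ _ (by simpa [h12, h13, hc] using this)
      have h3 : g 3 = 0 := by simpa [h0, h1.1, h1.2, hc0] using hgs
      intro i
      fin_cases i
      exacts [h0, h1.1, h1.2, h3]
    have hspan : ⊤ ≤ Submodule.span F (Set.range ![x₁, x₂, x₃, c]) := by
      intro t _
      obtain ⟨α, β, δ, w, rfl, h1, h3⟩ := hdec t
      obtain ⟨q, rfl⟩ := hcen w h1 h3 (hW w h1 h3)
      rw [Submodule.mem_span_range_iff_exists_fun]
      exact ⟨![α, β, δ, q], by simp [Fin.sum_univ_four]⟩
    refine ⟨Basis.mk hli hspan, ?_, ?_, ?_⟩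
    · simpa using h12
    · simpa using h13
    · intro i j hij h01 h02
      rw [Basis.mk_apply, Basis.mk_apply]
      fin_cases i <;> fin_cases j <;>
        first
        | exact absurd hij (by decide)
        | exact absurd rfl h01
        | exact absurd rfl h02
        | exact hc _
        | exact h23
  · right
    push Not at hW
    obtain ⟨w, hw1, hw3, hw2⟩ := hW
    obtain ⟨γ, hγ⟩ := h2w w hw1 hw3
    have hγ0 : γ ≠ 0 := by rintro rfl; exact hw2 (by rw [hγ, zero_smul])
    obtain ⟨x₄, h14, h34, h24⟩ : ∃ x₄ : T, ⁅x₁, x₄⁆ = 0 ∧ ⁅x₃, x₄⁆ = 0 ∧ ⁅x₂, x₄⁆ = c :=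
      ⟨γ⁻¹ • w, by simp [hw1], by simp [hw3],
        by rw [lie_smul, hγ, smul_smul, inv_mul_cancel₀ hγ0, one_smul]⟩
    clear hγ hw1 hw2 hw3 hγ0
    have hli : LinearIndependent F ![x₁, x₂, x₃, x₄, c] := by
      rw [Fintype.linearIndependent_iff]
      intro g hgs
      simp [Fin.sum_univ_five] at hgs
      have h0 : g 0 = 0 := by
        have := congrArg (fun z => ⁅x₃, z⁆) hgs
        simpa [h31, h32, h34, hc, hc0] using this
      have h1 : g 1 = 0 ∧ g 2 = 0 := by
        have := congrArg (fun z => ⁅x₁, z⁆) hgs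
        exact hli3 _ _ (by simpa [h12, h13, h14, hc] using this)
      have h3 : g 3 = 0 := by
        have := congrArg (fun z => ⁅x₂, z⁆) hgs
        simpa [h0, h1.1, h1.2, h24, hc, hc0] using this
      have h4 : g 4 = 0 := by simpa [h0, h1.1, h1.2, h3, hc0] using hgs
      intro i
      fin_cases i
      exacts [h0, h1.1, h1.2, h3, h4]
    have hspan : ⊤ ≤ Submodule.span F (Set.range ![x₁, x₂, x₃, x₄, c]) := by
      intro t _
      obtain ⟨α, β, δ, w, rfl, h1, h3⟩ := hdec t
      obtain ⟨ε, hε⟩ := h2w w h1 h3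
      obtain ⟨q, hq⟩ := hcen (w - ε • x₄) (by simp [h1, h14]) (by simp [h3, h34])
        (by simp [hε, h24])
      rw [sub_eq_iff_eq_add] at hq
      subst hq
      rw [Submodule.mem_span_range_iff_exists_fun]
      refine ⟨![α, β, δ, ε, q], ?_⟩
      simp [Fin.sum_univ_five]
      abel
    refine ⟨Basis.mk hli hspan, ?_, ?_, ?_, ?_⟩
    · simpa using h12
    · simpa using h13
    · simpa using h24
    · intro i j hij h01 h02 h13'
      rw [Basis.mk_apply, Basis.mk_apply]
      fin_cases i <;> fin_cases j <;>
        first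
        | exact absurd hij (by decide)
        | exact absurd rfl h01
        | exact absurd rfl h02
        | exact absurd rfl h13'
        | exact hc _
        | exact h23
        | exact h14
        | exact h34

end Forward

/-- A finite-dimensional stem nilpotent Lie algebra of class 3 with 2-dimensional derived
subalgebra is capable iff it is isomorphic to `L_{4,3}` or `L_{5,5}`. -/
theorem stem_class_three_capable_iff_iso_L43_or_L55
    (F T : Type u) [Field F] [LieRing T] [LieAlgebra F T] [FiniteDimensional F T]
    (hclass : LieModule.lowerCentralSeries F T T 2 ≠ ⊥ ∧ LieModule.lowerCentralSeries F T T 3 = ⊥)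
    (hder : finrank F ↥(LieModule.lowerCentralSeries F T T 1) = 2)
    (hstem : LieAlgebra.center F T ≤ LieModule.lowerCentralSeries F T T 1) :
    IsCapable F T ↔ IsL43 F T ∨ IsL55 F T := by
  exact ⟨iso_of_capable F T hclass hder hstem, fun h => h.elim (capable_of_L43 F T) (capable_of_L55 F T)⟩
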